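/- Let L_1,…,L_6 ⊆ ℂ^4 be 2-dimensional linear subspaces (lines in P^3) which are pairwise disjoint. Then there exists a nonzero homogeneous polynomial F of degree 72 in ℂ[x_0,x_1,x_2,x_3] with F ∈ I(L_i)^{19} for all i = 1,…,6; consequently α(I^{(19)}) ≤ 72, where I^{(m)} = ⋂_i I(L_i)^m, which gives the upper bound 72/19 for the Waldschmidt constant of six skew lines. -/

import Mathlib

open MvPolynomial

noncomputable section

abbrev C4 : Type := Fin 4 → ℂ
abbrev R3 : Type := MvPolynomial (Fin 4) ℂ

/-- The homogeneous ideal of the line in `P^3` corresponding to a linear subspace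
`L ⊆ ℂ^4`: all polynomials vanishing identically on `L`. -/
def lineIdeal (L : Submodule ℂ C4) : Ideal R3 where
  carrier := {F | ∀ v ∈ L, eval v F = 0}
  add_mem' := by
    intro a b ha hb v hv
    simp [ha v hv, hb v hv]
  zero_mem' := by
    intro v hv
    simp
  smul_mem' := by
    intro c F hF v hv
    simp [smul_eq_mul, hF v hv]

/-- The initial degree `α(J)` of an ideal `J`: the least `d` such that `J`
contains a nonzero homogeneous polynomial of degree `d`. -/
def alphaDeg (J : Ideal R3) : ℕ :=
  sInf {d | ∃ F ∈ J, F ≠ 0 ∧ MvPolynomial.IsHomogeneous F d}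


/-! ### The five quartics through six lines -/

section Quartics

variable {S : Type*} [CommRing S]

/-- first equation of the line `w = A u` -/
def w0 (a x : Fin 4 → S) : S := x 2 - a 0 * x 0 - a 1 * x 1

/-- second equation of the line `w = A u` -/
def w1 (a x : Fin 4 → S) : S := x 3 - a 2 * x 0 - a 3 * x 1

/-- quadric through the lines `a`, `b` and `u = 0` -/
def br (a b x : Fin 4 → S) : S := w0 a x * w1 b x - w1 a x * w0 b x

/-- first entry of the row `w^T J D` -/
def r0 (d : Fin 4 → S) (y z : S) : S := d 2 * y - d 0 * z

/-- second entry of the row `w^T J D` -/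
def r1 (d : Fin 4 → S) (y z : S) : S := d 3 * y - d 1 * z

/-- determinant of a 2 by 2 matrix -/
def dt (d : Fin 4 → S) : S := d 0 * d 3 - d 1 * d 2

/-- quadric through the lines `k`, `l`, `m` -/
def qq (k l m x : Fin 4 → S) : S :=
  r0 (l - k) (w0 k x) (w1 k x) * r1 (m - k) (w0 k x) (w1 k x)
    - r1 (l - k) (w0 k x) (w1 k x) * r0 (m - k) (w0 k x) (w1 k x)
    + dt (l - k) * (r0 (m - k) (w0 k x) (w1 k x) * x 0 + r1 (m - k) (w0 k x) (w1 k x) * x 1)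
    - dt (m - k) * (r0 (l - k) (w0 k x) (w1 k x) * x 0 + r1 (l - k) (w0 k x) (w1 k x) * x 1)

lemma qq_cyc (k l m x : Fin 4 → S) : qq k l m x = qq l m k x := by
  simp only [qq, r0, r1, dt, w0, w1, Pi.sub_apply]; ring

def bi : Fin 5 → Fin 5 := ![3, 2, 2, 1, 1]
def bj : Fin 5 → Fin 5 := ![4, 4, 3, 4, 3]
def bk : Fin 5 → Fin 5 := ![0, 0, 0, 0, 0]
def bl : Fin 5 → Fin 5 := ![1, 1, 1, 2, 2]
def bm : Fin 5 → Fin 5 := ![2, 3, 4, 3, 4]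

lemma cover (b i : Fin 5) : i = bi b ∨ i = bj b ∨ i = bk b ∨ i = bl b ∨ i = bm b := by
  revert b i; decide

def quart (A : Fin 5 → Fin 4 → S) (x : Fin 4 → S) (b : Fin 5) : S :=
  br (A (bi b)) (A (bj b)) x * qq (A (bk b)) (A (bl b)) (A (bm b)) x

/-- ideal of the line `w = A u` -/
def lid (a x : Fin 4 → S) : Ideal S := Ideal.span {w0 a x, w1 a x}

/-- ideal of the line `u = 0` -/
def zid (x : Fin 4 → S) : Ideal S := Ideal.span {x 0, x 1}

lemma w0_mem (a x : Fin 4 → S) : w0 a x ∈ lid a x := Ideal.subset_span (by simp)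
lemma w1_mem (a x : Fin 4 → S) : w1 a x ∈ lid a x := Ideal.subset_span (by simp)
lemma x0_mem (x : Fin 4 → S) : x 0 ∈ zid x := Ideal.subset_span (by simp)
lemma x1_mem (x : Fin 4 → S) : x 1 ∈ zid x := Ideal.subset_span (by simp)

lemma br_mem_left (a b x : Fin 4 → S) : br a b x ∈ lid a x :=
  Ideal.sub_mem _ (Ideal.mul_mem_right _ _ (w0_mem a x)) (Ideal.mul_mem_right _ _ (w1_mem a x))

lemma br_mem_right (a b x : Fin 4 → S) : br a b x ∈ lid b x :=
  Ideal.sub_mem _ (Ideal.mul_mem_left _ _ (w1_mem b x)) (Ideal.mul_mem_left _ _ (w0_mem b x))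

lemma qq_mem_first (k l m x : Fin 4 → S) : qq k l m x ∈ lid k x := by
  rw [← Ideal.Quotient.eq_zero_iff_mem]
  have h0 := Ideal.Quotient.eq_zero_iff_mem.2 (w0_mem k x)
  have h1 := Ideal.Quotient.eq_zero_iff_mem.2 (w1_mem k x)
  simp [qq, r0, r1, h0, h1]

lemma quart_mem_lid (A : Fin 5 → Fin 4 → S) (x : Fin 4 → S) (b i : Fin 5) :
    quart A x b ∈ lid (A i) x := by
  unfold quart
  rcases cover b i with h | h | h | h | h <;> rw [h]
  · exact Ideal.mul_mem_right _ _ (br_mem_left _ _ _)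
  · exact Ideal.mul_mem_right _ _ (br_mem_right _ _ _)
  · exact Ideal.mul_mem_left _ _ (qq_mem_first _ _ _ _)
  · rw [qq_cyc]; exact Ideal.mul_mem_left _ _ (qq_mem_first _ _ _ _)
  · rw [qq_cyc, qq_cyc]; exact Ideal.mul_mem_left _ _ (qq_mem_first _ _ _ _)

/-- coefficients of the linear forms `w^T J A` -/
def al (e : Fin 2) (a : Fin 4 → S) : Fin 2 → S :=
  if e = 0 then ![a 2, - a 0] else ![a 3, - a 1]

/-- coefficients of the quadratic form `qq` restricted to the line `u = 0` -/
def lq (k l m : Fin 4 → S) : Fin 3 → S :=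
  ![al 0 (l - k) 0 * al 1 (m - k) 0 - al 1 (l - k) 0 * al 0 (m - k) 0,
    al 0 (l - k) 0 * al 1 (m - k) 1 + al 0 (l - k) 1 * al 1 (m - k) 0
      - al 1 (l - k) 0 * al 0 (m - k) 1 - al 1 (l - k) 1 * al 0 (m - k) 0,
    al 0 (l - k) 1 * al 1 (m - k) 1 - al 1 (l - k) 1 * al 0 (m - k) 1]

/-- coefficients of the leading cubic forms of the quartics along `u = 0` -/
def lc (A : Fin 5 → Fin 4 → S) (b : Fin 5) (e : Fin 2) : ℕ → S
  | 0 => al e (A (bi b) - A (bj b)) 0 * lq (A (bk b)) (A (bl b)) (A (bm b)) 0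
  | 1 => al e (A (bi b) - A (bj b)) 0 * lq (A (bk b)) (A (bl b)) (A (bm b)) 1
      + al e (A (bi b) - A (bj b)) 1 * lq (A (bk b)) (A (bl b)) (A (bm b)) 0
  | 2 => al e (A (bi b) - A (bj b)) 0 * lq (A (bk b)) (A (bl b)) (A (bm b)) 2
      + al e (A (bi b) - A (bj b)) 1 * lq (A (bk b)) (A (bl b)) (A (bm b)) 1
  | 3 => al e (A (bi b) - A (bj b)) 1 * lq (A (bk b)) (A (bl b)) (A (bm b)) 2
  | _ => 0

/-- the linear system for the families of singular quartics -/
def cm (A : Fin 5 → Fin 4 → S) : Matrix (Fin 2 × Fin 6) (Fin 5 × Fin 3) S :=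
  fun ed ba => if (ba.2 : ℕ) ≤ (ed.2 : ℕ) then lc A ba.1 ed.1 ((ed.2 : ℕ) - (ba.2 : ℕ)) else 0

/-- the leading cubic form -/
def ld (A : Fin 5 → Fin 4 → S) (x : Fin 4 → S) (b : Fin 5) (e : Fin 2) : S :=
  (al e (A (bi b) - A (bj b)) 0 * x 2 + al e (A (bi b) - A (bj b)) 1 * x 3) *
  (lq (A (bk b)) (A (bl b)) (A (bm b)) 0 * x 2 ^ 2 + lq (A (bk b)) (A (bl b)) (A (bm b)) 1 * (x 2 * x 3)
    + lq (A (bk b)) (A (bl b)) (A (bm b)) 2 * x 3 ^ 2)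

/-- quadratic monomials -/
def mo (x : Fin 4 → S) : Fin 3 → S := ![x 2 ^ 2, x 2 * x 3, x 3 ^ 2]

lemma mo_ld (A : Fin 5 → Fin 4 → S) (x : Fin 4 → S) (b : Fin 5) (e : Fin 2) (a : Fin 3) :
    mo x a * ld A x b e = ∑ d : Fin 6, cm A (e, d) (b, a) * (x 2 ^ (5 - (d : ℕ)) * x 3 ^ (d : ℕ)) := by
  fin_cases a <;> simp [mo, ld, cm, lc, Fin.sum_univ_six] <;> ring

lemma br_lead (a b x : Fin 4 → S) :
    br a b x - (x 0 * (al 0 (a - b) 0 * x 2 + al 0 (a - b) 1 * x 3)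
      + x 1 * (al 1 (a - b) 0 * x 2 + al 1 (a - b) 1 * x 3)) ∈ zid x ^ 2 := by
  have : br a b x - (x 0 * (al 0 (a - b) 0 * x 2 + al 0 (a - b) 1 * x 3)
      + x 1 * (al 1 (a - b) 0 * x 2 + al 1 (a - b) 1 * x 3)) =
      x 0 * ((a 0 * b 2 - a 2 * b 0) * x 0 + (a 0 * b 3 + a 1 * b 2 - a 2 * b 1 - a 3 * b 0) * x 1)
      + x 1 * ((a 1 * b 3 - a 3 * b 1) * x 1) := by
    simp [br, al, w0, w1]; ring
  rw [this, pow_two]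
  refine Ideal.add_mem _ (Ideal.mul_mem_mul (x0_mem x) (Ideal.add_mem _ ?_ ?_))
    (Ideal.mul_mem_mul (x1_mem x) ?_)
  · exact Ideal.mul_mem_left _ _ (x0_mem x)
  · exact Ideal.mul_mem_left _ _ (x1_mem x)
  · exact Ideal.mul_mem_left _ _ (x1_mem x)

lemma qq_lead (k l m x : Fin 4 → S) :
    qq k l m x - (lq k l m 0 * x 2 ^ 2 + lq k l m 1 * (x 2 * x 3) + lq k l m 2 * x 3 ^ 2) ∈ zid x := by
  rw [← Ideal.Quotient.eq_zero_iff_mem]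
  have h0 := Ideal.Quotient.eq_zero_iff_mem.2 (x0_mem x)
  have h1 := Ideal.Quotient.eq_zero_iff_mem.2 (x1_mem x)
  simp [qq, r0, r1, w0, w1, lq, al, h0, h1]
  ring

lemma quart_lead (A : Fin 5 → Fin 4 → S) (x : Fin 4 → S) (b : Fin 5) :
    quart A x b - (x 0 * ld A x b 0 + x 1 * ld A x b 1) ∈ zid x ^ 2 := by
  have h1 := br_lead (A (bi b)) (A (bj b)) x
  have h2 := qq_lead (A (bk b)) (A (bl b)) (A (bm b)) x
  have h3 : (x 0 * (al 0 (A (bi b) - A (bj b)) 0 * x 2 + al 0 (A (bi b) - A (bj b)) 1 * x 3)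
      + x 1 * (al 1 (A (bi b) - A (bj b)) 0 * x 2 + al 1 (A (bi b) - A (bj b)) 1 * x 3)) ∈ zid x :=
    Ideal.add_mem _ (Ideal.mul_mem_right _ _ (x0_mem x)) (Ideal.mul_mem_right _ _ (x1_mem x))
  have h4 := Ideal.add_mem _ (Ideal.mul_mem_right (qq (A (bk b)) (A (bl b)) (A (bm b)) x) _ h1)
    (by rw [pow_two]; exact Ideal.mul_mem_mul h3 h2)
  convert h4 using 1
  unfold quart ld
  ring

lemma quart_mem_zid (A : Fin 5 → Fin 4 → S) (x : Fin 4 → S) (b : Fin 5) :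
    quart A x b ∈ zid x := by
  have h := Ideal.pow_le_self (two_ne_zero) (quart_lead A x b)
  have h2 : x 0 * ld A x b 0 + x 1 * ld A x b 1 ∈ zid x :=
    Ideal.add_mem _ (Ideal.mul_mem_right _ _ (x0_mem x)) (Ideal.mul_mem_right _ _ (x1_mem x))
  simpa using Ideal.add_mem _ h h2

/-- the 3 by 3 matrix of quartics -/
def mat (A : Fin 5 → Fin 4 → S) (x : Fin 4 → S) (c : Fin 3 → Fin 5 × Fin 3 → S) :
    Matrix (Fin 3) (Fin 3) S :=
  fun k a => ∑ b, c k (b, a) * quart A x b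

lemma mat_mem_lid (A : Fin 5 → Fin 4 → S) (x : Fin 4 → S) (c : Fin 3 → Fin 5 × Fin 3 → S)
    (k a : Fin 3) (i : Fin 5) : mat A x c k a ∈ lid (A i) x :=
  Ideal.sum_mem _ fun b _ => Ideal.mul_mem_left _ _ (quart_mem_lid A x b i)

lemma mat_mem_zid (A : Fin 5 → Fin 4 → S) (x : Fin 4 → S) (c : Fin 3 → Fin 5 × Fin 3 → S)
    (k a : Fin 3) : mat A x c k a ∈ zid x :=
  Ideal.sum_mem _ fun b _ => Ideal.mul_mem_left _ _ (quart_mem_zid A x b)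

lemma mat_mo (A : Fin 5 → Fin 4 → S) (x : Fin 4 → S) (c : Fin 3 → Fin 5 × Fin 3 → S)
    (hc : ∀ k, (cm A).mulVec (c k) = 0) (k : Fin 3) :
    ∑ a, mat A x c k a * mo x a ∈ zid x ^ 2 := by
  have key : ∀ e : Fin 2, ∑ a, ∑ b, c k (b, a) * (mo x a * ld A x b e) = 0 := by
    intro e
    have h : ∀ d : Fin 6, ∑ ba : Fin 5 × Fin 3, cm A (e, d) ba * c k ba = 0 := fun d =>
      congrFun (hc k) (e, d)
    calc ∑ a, ∑ b, c k (b, a) * (mo x a * ld A x b e)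
        = ∑ d : Fin 6, (∑ ba : Fin 5 × Fin 3, cm A (e, d) ba * c k ba)
            * (x 2 ^ (5 - (d : ℕ)) * x 3 ^ (d : ℕ)) := by
          simp_rw [mo_ld, Finset.mul_sum, Finset.sum_mul]
          rw [Finset.sum_comm' (t' := Finset.univ) (s' := fun _ => Finset.univ) (by simp)]
          rw [← Fintype.sum_prod_type' (f := fun (b : Fin 5) (a : Fin 3) => ∑ d : Fin 6,
            c k (b, a) * (cm A (e, d) (b, a) * (x 2 ^ (5 - (d : ℕ)) * x 3 ^ (d : ℕ))))]
          rw [Finset.sum_comm]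
          refine Finset.sum_congr rfl fun d _ => Finset.sum_congr rfl fun ba _ => ?_
          ring
      _ = 0 := by simp [h]
  have h2 : ∑ a, mat A x c k a * mo x a =
      ∑ a, ∑ b, (c k (b, a) * mo x a) * (quart A x b - (x 0 * ld A x b 0 + x 1 * ld A x b 1)) := by
    have : ∑ a, ∑ b, (c k (b, a) * mo x a) * (quart A x b - (x 0 * ld A x b 0 + x 1 * ld A x b 1))
      = ∑ a, mat A x c k a * mo x a - (x 0 * ∑ a, ∑ b, c k (b, a) * (mo x a * ld A x b 0)
        + x 1 * ∑ a, ∑ b, c k (b, a) * (mo x a * ld A x b 1)) := by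
      simp only [mat, Finset.sum_mul, Finset.mul_sum, ← Finset.sum_add_distrib,
        ← Finset.sum_sub_distrib]
      refine Finset.sum_congr rfl fun a _ => Finset.sum_congr rfl fun b _ => ?_
      ring
    rw [this, key, key]; simp
  rw [h2]
  exact Ideal.sum_mem _ fun a _ => Ideal.sum_mem _ fun b _ =>
    Ideal.mul_mem_left _ _ (quart_lead A x b)

lemma det_mem (I : Ideal S) (M : Matrix (Fin 3) (Fin 3) S) (h : ∀ i j, M i j ∈ I) :
    M.det ∈ I ^ 3 := by
  have h3 : ∀ a b c d e f, M a b * M c d * M e f ∈ I ^ 3 := by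
    intro a b c d e f
    rw [pow_succ, pow_two]
    exact Ideal.mul_mem_mul (Ideal.mul_mem_mul (h _ _) (h _ _)) (h _ _)
  rw [Matrix.det_fin_three]
  exact Ideal.sub_mem _ (Ideal.add_mem _ (Ideal.add_mem _ (Ideal.sub_mem _ (Ideal.sub_mem _
    (h3 _ _ _ _ _ _) (h3 _ _ _ _ _ _)) (h3 _ _ _ _ _ _)) (h3 _ _ _ _ _ _)) (h3 _ _ _ _ _ _))
    (h3 _ _ _ _ _ _)

lemma det_mul_mem (I : Ideal S) (M : Matrix (Fin 3) (Fin 3) S) (m : Fin 3 → S)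
    (h : ∀ i j, M i j ∈ I) (hm : ∀ k, ∑ a, M k a * m a ∈ I ^ 2) :
    m 0 * M.det ∈ I ^ 4 := by
  have h3 : ∀ a b c d k, M a b * M c d * (∑ a, M k a * m a) ∈ I ^ 4 := by
    intro a b c d k
    rw [show 4 = 2 + 2 from rfl, pow_add]
    refine Ideal.mul_mem_mul ?_ (hm k)
    rw [pow_two]
    exact Ideal.mul_mem_mul (h _ _) (h _ _)
  have : m 0 * M.det = (M 1 1 * M 2 2 * (∑ a, M 0 a * m a) - M 1 2 * M 2 1 * (∑ a, M 0 a * m a))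
     + (M 2 1 * M 0 2 * (∑ a, M 1 a * m a) - M 2 2 * M 0 1 * (∑ a, M 1 a * m a))
     + (M 0 1 * M 1 2 * (∑ a, M 2 a * m a) - M 0 2 * M 1 1 * (∑ a, M 2 a * m a)) := by
    rw [Matrix.det_fin_three]
    simp only [Fin.sum_univ_three]
    ring
  rw [this]
  exact Ideal.add_mem _ (Ideal.add_mem _ (Ideal.sub_mem _ (h3 _ _ _ _ _) (h3 _ _ _ _ _))
    (Ideal.sub_mem _ (h3 _ _ _ _ _) (h3 _ _ _ _ _))) (Ideal.sub_mem _ (h3 _ _ _ _ _) (h3 _ _ _ _ _))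

lemma G_mem_lid (A : Fin 5 → Fin 4 → S) (x : Fin 4 → S) (c : Fin 3 → Fin 5 × Fin 3 → S)
    (i : Fin 5) : (mat A x c).det ∈ lid (A i) x ^ 3 :=
  det_mem _ _ fun k a => mat_mem_lid A x c k a i

lemma G_mem_zid (A : Fin 5 → Fin 4 → S) (x : Fin 4 → S) (c : Fin 3 → Fin 5 × Fin 3 → S)
    (hc : ∀ k, (cm A).mulVec (c k) = 0) :
    x 2 ^ 2 * (mat A x c).det ∈ zid x ^ 4 :=
  det_mul_mem _ _ (mo x) (mat_mem_zid A x c) (mat_mo A x c hc)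

/-! naturality -/

variable {T : Type*} [CommRing T] (f : S →+* T)

lemma map_quart (A : Fin 5 → Fin 4 → S) (x : Fin 4 → S) (b : Fin 5) :
    f (quart A x b) = quart (fun i j => f (A i j)) (fun j => f (x j)) b := by
  simp [quart, br, qq, w0, w1, r0, r1, dt]

lemma map_det_mat (A : Fin 5 → Fin 4 → S) (x : Fin 4 → S) (c : Fin 3 → Fin 5 × Fin 3 → S) :
    f (mat A x c).det =
      (mat (fun i j => f (A i j)) (fun j => f (x j)) (fun k ba => f (c k ba))).det := by
  rw [RingHom.map_det]
  congr 1
  ext k a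
  simp [mat, map_quart]

lemma map_al (e : Fin 2) (a : Fin 4 → S) (i : Fin 2) : f (al e a i) = al e (fun j => f (a j)) i := by
  unfold al; split_ifs <;> fin_cases i <;> simp

lemma map_lq (k l m : Fin 4 → S) (i : Fin 3) :
    f (lq k l m i) = lq (fun j => f (k j)) (fun j => f (l j)) (fun j => f (m j)) i := by
  have h : ∀ a b : Fin 4 → S, (fun j => f (a j)) - (fun j => f (b j)) = fun j => f ((a - b) j) := by
    intro a b; ext j; simp
  fin_cases i <;> simp only [lq] <;> simp [map_al] <;> simp only [Pi.sub_def]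

lemma map_lc (A : Fin 5 → Fin 4 → S) (b : Fin 5) (e : Fin 2) (n : ℕ) :
    f (lc A b e n) = lc (fun i j => f (A i j)) b e n := by
  have h : ∀ a b : Fin 4 → S, (fun j => f (a j)) - (fun j => f (b j)) = fun j => f ((a - b) j) := by
    intro a b; ext j; simp
  match n with
  | 0 => simp only [lc, map_mul, map_lq, map_al, h]
  | 1 => simp only [lc, map_mul, map_add, map_lq, map_al, h]
  | 2 => simp only [lc, map_mul, map_add, map_lq, map_al, h]
  | 3 => simp only [lc, map_mul, map_lq, map_al, h]
  | n + 4 => simp [lc]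

lemma map_cm (A : Fin 5 → Fin 4 → S) (p : Fin 2 × Fin 6) (q : Fin 5 × Fin 3) :
    f (cm A p q) = cm (fun i j => f (A i j)) p q := by
  unfold cm; split_ifs <;> simp [map_lc]

end Quartics


/-! ### A nondegenerate example and the deformation argument -/

/-- five sample matrices -/
def A0 : Fin 5 → Fin 4 → ℤ :=
  ![![0, 0, 0, 0], ![1, 0, 0, 1], ![0, 0, 1, 0], ![1, -1, 1, 1], ![0, -1, 0, 0]]

/-- table of twice a right inverse of `cm A0` -/
def NT : Fin 5 → Fin 3 → Fin 2 → Fin 6 → ℤ :=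
  ![
    ![![![-1, 1, 0, -1, 0, 0], ![0, -1, -1, 0, 0, 0]], ![![-1, -1, 0, 1, 0, 0], ![0, -1, 1, 0, 0, 0]], ![![1, 0, -1, 1, 0, -3], ![-1, -1, 0, 1, -1, -2]]], 
    ![![![-1, -1, 0, 1, 0, 0], ![0, 1, 1, 0, 0, 0]], ![![0, 0, 0, 0, 0, 0], ![0, 0, 0, 0, 0, 0]], ![![0, 0, 0, 0, 0, 2], ![0, 0, 0, 0, 0, 2]]], 
    ![![![1, 0, -1, -1, 1, -1], ![-1, -1, 0, 1, 0, -1]], ![![0, 0, 0, 0, -1, 0], ![0, 0, 0, 0, 1, -1]], ![![0, 0, 0, 0, 0, -2], ![0, 0, 0, 0, 0, 0]]], 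
    ![![![-1, 1, 0, -1, 0, 0], ![2, -1, -1, 0, 0, 0]], ![![0, 0, 0, 0, 0, 0], ![0, 0, 0, 0, 0, 0]], ![![0, 0, 0, 0, -1, -2], ![0, 0, 0, 0, -1, -1]]], 
    ![![![1, -1, 0, -1, 0, 0], ![-2, 1, -1, 0, 0, 0]], ![![0, -1, -1, 0, 0, 1], ![-1, 0, 1, -1, 1, 0]], ![![0, 0, 0, 0, 0, 0], ![0, 0, 0, 0, 0, 0]]]]

/-- table of the kernel of `cm A0` -/
def KT : Fin 3 → Fin 5 → Fin 3 → ℤ :=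
  ![
    ![![1, -1, 2], ![-1, 2, 0], ![-1, -1, 0], ![1, 0, 1], ![-1, -3, 0]], 
    ![![-1, 1, 0], ![1, 0, 0], ![-1, 1, 0], ![-1, 0, -1], ![-1, 1, 2]], 
    ![![0, 1, 1], ![0, 0, 0], ![0, 0, 0], ![0, 1, 0], ![-1, -1, 0]]]

def NN : Matrix (Fin 5 × Fin 3) (Fin 2 × Fin 6) ℤ := fun ba ed => NT ba.1 ba.2 ed.1 ed.2

def KK (k : Fin 3) (ba : Fin 5 × Fin 3) : ℤ := KT k ba.1 ba.2

lemma A0_NN : ∀ p q, (cm A0 * NN) p q = if p = q then 2 else 0 := by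
  decide +kernel

lemma A0_KK : ∀ k p, (cm A0).mulVec (KK k) p = 0 := by
  decide +kernel

lemma A0_det : (mat A0 ![1, 1, 1, 2] KK).det = -16 := by
  rw [Matrix.det_fin_three]
  decide +kernel

lemma lift_kernel {m n : Type*} [Fintype m] [Fintype n] [DecidableEq m] [DecidableEq n]
    (M : Matrix m n (Polynomial ℂ)) (N : Matrix n m ℂ) (δ : ℂ)
    (h1 : (M.map (Polynomial.evalRingHom 1)) * N = δ • (1 : Matrix m m ℂ))
    (v : n → ℂ) (hv : (M.map (Polynomial.evalRingHom 1)).mulVec v = 0) :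
    ∃ c : n → Polynomial ℂ, M.mulVec c = 0 ∧
      ∀ i, Polynomial.evalRingHom 1 (c i) = δ ^ Fintype.card m * v i := by
  set N' : Matrix n m (Polynomial ℂ) := N.map Polynomial.C with hN'
  set v' : n → Polynomial ℂ := fun i => Polynomial.C (v i) with hv'
  have hN1 : N'.map (Polynomial.evalRingHom 1) = N := by
    ext i j; simp [hN']
  have hv1 : ⇑(Polynomial.evalRingHom (1 : ℂ)) ∘ v' = v := by
    ext i; simp [hv']
  refine ⟨(M * N').det • v' - N'.mulVec ((M * N').adjugate.mulVec (M.mulVec v')), ?_, ?_⟩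
  · rw [Matrix.mulVec_sub, Matrix.mulVec_smul]
    simp only [Matrix.mulVec_mulVec, ← Matrix.mul_assoc]
    rw [Matrix.mul_adjugate]
    simp [Matrix.smul_mulVec]
  · intro i
    have hd : Polynomial.evalRingHom 1 (M * N').det = δ ^ Fintype.card m := by
      rw [RingHom.map_det, RingHom.mapMatrix_apply, Matrix.map_mul, hN1, h1]
      simp
    have hz : ∀ j, Polynomial.evalRingHom 1 (M.mulVec v' j) = 0 := by
      intro j
      rw [RingHom.map_mulVec, hv1, hv]; rfl
    have hz2 : ∀ j, Polynomial.evalRingHom 1 ((N' * (M * N').adjugate).mulVec (M.mulVec v') j) = 0 := by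
      intro j
      rw [RingHom.map_mulVec]
      have : ⇑(Polynomial.evalRingHom (1 : ℂ)) ∘ (M.mulVec v') = 0 := by
        ext j; exact hz j
      rw [this]; simp
    rw [Pi.sub_apply, Pi.smul_apply, map_sub, smul_eq_mul, map_mul, hd, Matrix.mulVec_mulVec, hz2]
    simp [hv']

/-- the linear family of matrices joining the given ones (at 0) and the sample (at 1) -/
def Afam (A : Fin 5 → Fin 4 → ℂ) (i : Fin 5) (j : Fin 4) : Polynomial ℂ :=
  Polynomial.C (A i j) + Polynomial.X * Polynomial.C ((A0 i j : ℂ) - A i j)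

lemma exists_c (A : Fin 5 → Fin 4 → ℂ) : ∃ c : Fin 3 → Fin 5 × Fin 3 → Polynomial ℂ,
    (∀ k, (cm (Afam A)).mulVec (c k) = 0) ∧
    ∀ k i, Polynomial.evalRingHom 1 (c k i) = 2 ^ 12 * (KK k i : ℂ) := by
  have hA : (fun i j => Polynomial.evalRingHom 1 (Afam A i j)) = fun i j => Int.castRingHom ℂ (A0 i j) := by
    ext i j; simp [Afam]
  have hM : (cm (Afam A)).map (Polynomial.evalRingHom 1) = (cm A0).map (Int.castRingHom ℂ) := by
    ext p q
    rw [Matrix.map_apply, Matrix.map_apply, map_cm, map_cm, hA]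
  have h1 : ((cm (Afam A)).map (Polynomial.evalRingHom 1)) * NN.map (Int.castRingHom ℂ)
      = (2 : ℂ) • (1 : Matrix (Fin 2 × Fin 6) (Fin 2 × Fin 6) ℂ) := by
    rw [hM, ← Matrix.map_mul]
    ext p q
    rw [Matrix.map_apply, A0_NN]
    by_cases h : p = q <;> simp [h]
  have h2 : ∀ k, ∃ c : Fin 5 × Fin 3 → Polynomial ℂ, (cm (Afam A)).mulVec c = 0 ∧
      ∀ i, Polynomial.evalRingHom 1 (c i) = 2 ^ Fintype.card (Fin 2 × Fin 6) * (KK k i : ℂ) := by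
    intro k
    refine lift_kernel _ _ 2 h1 _ ?_
    rw [hM]
    ext p
    have := congrArg (Int.castRingHom ℂ) (A0_KK k p)
    rw [RingHom.map_mulVec] at this
    simpa [Function.comp_def] using this
  choose c hc hc2 using h2
  exact ⟨c, hc, by simpa using hc2⟩

/-- the family of surfaces of degree 12 -/
def GR (A : Fin 5 → Fin 4 → ℂ) (c : Fin 3 → Fin 5 × Fin 3 → Polynomial ℂ) :
    MvPolynomial (Fin 4) (Polynomial ℂ) :=
  (mat (fun i j => C (Afam A i j)) X (fun k i => C (c k i))).det

lemma GR_ne_zero (A : Fin 5 → Fin 4 → ℂ) (c : Fin 3 → Fin 5 × Fin 3 → Polynomial ℂ)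
    (h : ∀ k i, Polynomial.evalRingHom 1 (c k i) = 2 ^ 12 * (KK k i : ℂ)) : GR A c ≠ 0 := by
  intro h0
  have h1 := congrArg (eval₂Hom (Polynomial.evalRingHom (1 : ℂ))
    (fun j => Int.castRingHom ℂ ((![1, 1, 1, 2] : Fin 4 → ℤ) j))) h0
  rw [GR, map_det_mat, map_zero] at h1
  have hA : (fun i j => eval₂Hom (Polynomial.evalRingHom (1 : ℂ))
    (fun j => Int.castRingHom ℂ ((![1, 1, 1, 2] : Fin 4 → ℤ) j)) (C (Afam A i j)))
      = fun i j => Int.castRingHom ℂ (A0 i j) := by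
    ext i j; rw [eval₂Hom_C]; simp [Afam]
  have hc : (fun k i => eval₂Hom (Polynomial.evalRingHom (1 : ℂ))
    (fun j => Int.castRingHom ℂ ((![1, 1, 1, 2] : Fin 4 → ℤ) j)) (C (c k i)))
      = fun k i => Int.castRingHom ℂ (2 ^ 12 * KK k i) := by
    ext k i
    rw [eval₂Hom_C, h]; norm_num
  have hX : (fun j => eval₂Hom (Polynomial.evalRingHom (1 : ℂ))
    (fun j => Int.castRingHom ℂ ((![1, 1, 1, 2] : Fin 4 → ℤ) j)) (X j))
      = fun j => Int.castRingHom ℂ ((![1, 1, 1, 2] : Fin 4 → ℤ) j) := by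
    ext j; rw [eval₂Hom_X']
  rw [hA, hc, hX, ← map_det_mat] at h1
  have h2 : mat A0 ![1, 1, 1, 2] (fun k i => 2 ^ 12 * KK k i)
      = (2 ^ 12 : ℤ) • mat A0 ![1, 1, 1, 2] KK := by
    ext k a
    simp only [mat, Matrix.smul_apply, smul_eq_mul, Finset.mul_sum, mul_assoc]
  rw [h2, Matrix.det_smul, A0_det] at h1
  simp at h1

/-! ### Saturation of the powers of the ideal of a line -/

section Saturation

variable {R : Type*} [CommRing R]

/-- scaling of the variables `X 0`, `X 1` -/
def th : MvPolynomial (Fin 4) R →ₐ[R] Polynomial (MvPolynomial (Fin 4) R) :=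
  aeval ![Polynomial.X * Polynomial.C (X 0), Polynomial.X * Polynomial.C (X 1),
    Polynomial.C (X 2), Polynomial.C (X 3)]

lemma th_eval (P : MvPolynomial (Fin 4) R) : Polynomial.evalRingHom 1 (th P) = P := by
  induction P using MvPolynomial.induction_on with
  | C a => simp [th]
  | add p q hp hq => rw [map_add, map_add, hp, hq]
  | mul_X p i hp =>
    rw [map_mul, map_mul, hp]
    congr 1
    fin_cases i <;> simp [th]

lemma th_coeff (P : MvPolynomial (Fin 4) R) (n : ℕ) :
    (th P).coeff n ∈ (zid (X : Fin 4 → MvPolynomial (Fin 4) R)) ^ n := by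
  induction P using MvPolynomial.induction_on generalizing n with
  | C a =>
    have : th (C a : MvPolynomial (Fin 4) R) = Polynomial.C (C a) := by
      simp [th]
    rw [this, Polynomial.coeff_C]
    split_ifs with h
    · subst h; simp
    · exact Ideal.zero_mem _
  | add p q hp hq => rw [map_add, Polynomial.coeff_add]; exact Ideal.add_mem _ (hp n) (hq n)
  | mul_X p i hp =>
    have h0 : ∀ (y : MvPolynomial (Fin 4) R), y ∈ zid (X : Fin 4 → MvPolynomial (Fin 4) R) →
        (th p * (Polynomial.X * Polynomial.C y)).coeff n ∈
          (zid (X : Fin 4 → MvPolynomial (Fin 4) R)) ^ n := by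
      intro y hy
      rw [← mul_assoc, Polynomial.coeff_mul_C]
      cases n with
      | zero => simp
      | succ n =>
        rw [Polynomial.coeff_mul_X, pow_succ]
        exact Ideal.mul_mem_mul (hp n) hy
    have h1 : ∀ (y : MvPolynomial (Fin 4) R), (th p * Polynomial.C y).coeff n ∈
          (zid (X : Fin 4 → MvPolynomial (Fin 4) R)) ^ n := by
      intro y
      rw [Polynomial.coeff_mul_C]
      exact Ideal.mul_mem_right _ _ (hp n)
    rw [map_mul]
    fin_cases i
    · simpa [th] using h0 (X 0) (x0_mem _)
    · simpa [th] using h0 (X 1) (x1_mem _)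
    · simpa [th] using h1 (X 2)
    · simpa [th] using h1 (X 3)

lemma mem_of_dvd (P : MvPolynomial (Fin 4) R) (m : ℕ) (h : Polynomial.X ^ m ∣ th P) :
    P ∈ (zid (X : Fin 4 → MvPolynomial (Fin 4) R)) ^ m := by
  rw [Polynomial.X_pow_dvd_iff] at h
  rw [← th_eval P, Polynomial.coe_evalRingHom, Polynomial.eval_eq_sum]
  refine Ideal.sum_mem _ fun n hn => ?_
  by_cases hnm : n < m
  · exact absurd (h n hnm) (Polynomial.mem_support_iff.1 hn)
  · exact Ideal.mul_mem_right _ _ (Ideal.pow_le_pow_right (not_lt.1 hnm) (th_coeff P n))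

lemma dvd_of_mem (P : MvPolynomial (Fin 4) R) (m : ℕ)
    (h : P ∈ (zid (X : Fin 4 → MvPolynomial (Fin 4) R)) ^ m) : Polynomial.X ^ m ∣ th P := by
  have h1 := Ideal.mem_map_of_mem (th (R := R)).toRingHom h
  rw [Ideal.map_pow] at h1
  have h2 : (zid (X : Fin 4 → MvPolynomial (Fin 4) R)).map (th (R := R)).toRingHom ≤
      Ideal.span {Polynomial.X} := by
    rw [zid, Ideal.map_span, Ideal.span_le]
    rintro _ ⟨y, hy, rfl⟩
    rw [SetLike.mem_coe, Ideal.mem_span_singleton]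
    rcases hy with rfl | rfl <;> simp [th]
  have h3 := Ideal.pow_right_mono h2 m h1
  rwa [Ideal.span_singleton_pow, Ideal.mem_span_singleton] at h3

lemma sat_zid [IsDomain R] (f P : MvPolynomial (Fin 4) R) (m : ℕ) (hf : f ≠ 0)
    (hf2 : th f = Polynomial.C f)
    (h : f * P ∈ (zid (X : Fin 4 → MvPolynomial (Fin 4) R)) ^ m) :
    P ∈ (zid (X : Fin 4 → MvPolynomial (Fin 4) R)) ^ m := by
  apply mem_of_dvd
  have h1 := dvd_of_mem _ _ h
  rw [map_mul, hf2, Polynomial.X_pow_dvd_iff] at h1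
  rw [Polynomial.X_pow_dvd_iff]
  intro d hd
  have := h1 d hd
  rw [Polynomial.coeff_C_mul] at this
  exact (mul_eq_zero.1 this).resolve_left hf

def ps (a : Fin 4 → R) : MvPolynomial (Fin 4) R →ₐ[R] MvPolynomial (Fin 4) R :=
  aeval ![w0 (fun j => C (a j)) X, w1 (fun j => C (a j)) X, X 0, X 1]

def pinv (a : Fin 4 → R) : MvPolynomial (Fin 4) R →ₐ[R] MvPolynomial (Fin 4) R :=
  aeval ![X 2, X 3, X 0 + C (a 0) * X 2 + C (a 1) * X 3, X 1 + C (a 2) * X 2 + C (a 3) * X 3]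

lemma ps_pinv (a : Fin 4 → R) (P : MvPolynomial (Fin 4) R) : ps a (pinv a P) = P := by
  have : (ps a).comp (pinv a) = AlgHom.id R _ := by
    apply MvPolynomial.algHom_ext
    intro i
    fin_cases i <;> simp [ps, pinv, w0, w1, algHom_C, algebraMap_eq] <;> ring
  exact DFunLike.congr_fun this P

lemma sat_lid [IsDomain R] (r : R) (hr : r ≠ 0) (a : Fin 4 → R) (P : MvPolynomial (Fin 4) R) (m : ℕ)
    (h : C r * P ∈ (lid (fun j => C (a j)) (X : Fin 4 → MvPolynomial (Fin 4) R)) ^ m) :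
    P ∈ (lid (fun j => C (a j)) (X : Fin 4 → MvPolynomial (Fin 4) R)) ^ m := by
  have h1 := Ideal.mem_map_of_mem (pinv a).toRingHom h
  rw [Ideal.map_pow] at h1
  have h2 : (lid (fun j => C (a j)) (X : Fin 4 → MvPolynomial (Fin 4) R)).map (pinv a).toRingHom ≤
      zid X := by
    rw [lid, Ideal.map_span, Ideal.span_le]
    rintro _ ⟨y, hy, rfl⟩
    rcases hy with rfl | rfl
    · have : pinv a (w0 (fun j => C (a j)) X) = X 0 := by
        simp [pinv, w0, algHom_C, algebraMap_eq]; ring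
      simpa [this] using x0_mem _
    · have : pinv a (w1 (fun j => C (a j)) X) = X 1 := by
        simp [pinv, w1, algHom_C, algebraMap_eq]; ring
      simpa [this] using x1_mem _
  have h3 := Ideal.pow_right_mono h2 m h1
  have h4 : pinv a P ∈ (zid (X : Fin 4 → MvPolynomial (Fin 4) R)) ^ m := by
    refine sat_zid (C r) _ m (by simpa using hr) (by simp [th, algHom_C]) ?_
    simpa [algHom_C, algebraMap_eq] using h3
  have h5 := Ideal.mem_map_of_mem (ps a).toRingHom h4
  rw [Ideal.map_pow] at h5
  have h6 : (zid (X : Fin 4 → MvPolynomial (Fin 4) R)).map (ps a).toRingHom ≤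
      lid (fun j => C (a j)) X := by
    rw [zid, Ideal.map_span, Ideal.span_le]
    rintro _ ⟨y, hy, rfl⟩
    rcases hy with rfl | rfl
    · simpa [ps] using w0_mem _ _
    · simpa [ps] using w1_mem _ _
  have h7 := Ideal.pow_right_mono h6 m h5
  simpa [ps_pinv] using h7

/-! homogeneity -/

lemma hmul {p q : MvPolynomial (Fin 4) R} {m n k : ℕ} (hp : p.IsHomogeneous m)
    (hq : q.IsHomogeneous n) (h : m + n = k) : (p * q).IsHomogeneous k := h ▸ hp.mul hq

lemma hom_w0 (a : Fin 4 → R) : (w0 (fun j => C (a j)) X : MvPolynomial (Fin 4) R).IsHomogeneous 1 :=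
  ((isHomogeneous_X _ _).sub (hmul (isHomogeneous_C _ _) (isHomogeneous_X _ _) rfl)).sub
    (hmul (isHomogeneous_C _ _) (isHomogeneous_X _ _) rfl)

lemma hom_w1 (a : Fin 4 → R) : (w1 (fun j => C (a j)) X : MvPolynomial (Fin 4) R).IsHomogeneous 1 :=
  ((isHomogeneous_X _ _).sub (hmul (isHomogeneous_C _ _) (isHomogeneous_X _ _) rfl)).sub
    (hmul (isHomogeneous_C _ _) (isHomogeneous_X _ _) rfl)

lemma hom_r0 (l k : Fin 4 → R) {y z : MvPolynomial (Fin 4) R} (hy : y.IsHomogeneous 1)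
    (hz : z.IsHomogeneous 1) :
    (r0 ((fun j => C (l j)) - (fun j => C (k j))) y z).IsHomogeneous 1 :=
  (hmul ((isHomogeneous_C _ _).sub (isHomogeneous_C _ _)) hy rfl).sub
    (hmul ((isHomogeneous_C _ _).sub (isHomogeneous_C _ _)) hz rfl)

lemma hom_r1 (l k : Fin 4 → R) {y z : MvPolynomial (Fin 4) R} (hy : y.IsHomogeneous 1)
    (hz : z.IsHomogeneous 1) :
    (r1 ((fun j => C (l j)) - (fun j => C (k j))) y z).IsHomogeneous 1 :=
  (hmul ((isHomogeneous_C _ _).sub (isHomogeneous_C _ _)) hy rfl).sub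
    (hmul ((isHomogeneous_C _ _).sub (isHomogeneous_C _ _)) hz rfl)

lemma hom_dt (l k : Fin 4 → R) :
    (dt ((fun j => C (l j)) - (fun j => C (k j))) : MvPolynomial (Fin 4) R).IsHomogeneous 0 :=
  (hmul ((isHomogeneous_C _ _).sub (isHomogeneous_C _ _))
    ((isHomogeneous_C _ _).sub (isHomogeneous_C _ _)) rfl).sub
  (hmul ((isHomogeneous_C _ _).sub (isHomogeneous_C _ _))
    ((isHomogeneous_C _ _).sub (isHomogeneous_C _ _)) rfl)

lemma hom_qq (k l m : Fin 4 → R) :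
    (qq (fun j => C (k j)) (fun j => C (l j)) (fun j => C (m j)) X :
      MvPolynomial (Fin 4) R).IsHomogeneous 2 := by
  have a := hom_w0 k
  have b := hom_w1 k
  refine IsHomogeneous.sub (IsHomogeneous.add (IsHomogeneous.sub
    (hmul (hom_r0 _ _ a b) (hom_r1 _ _ a b) rfl) (hmul (hom_r1 _ _ a b) (hom_r0 _ _ a b) rfl))
    (hmul (hom_dt _ _) (IsHomogeneous.add (hmul (hom_r0 _ _ a b) (isHomogeneous_X _ _) rfl)
      (hmul (hom_r1 _ _ a b) (isHomogeneous_X _ _) rfl)) rfl))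
    (hmul (hom_dt _ _) (IsHomogeneous.add (hmul (hom_r0 _ _ a b) (isHomogeneous_X _ _) rfl)
      (hmul (hom_r1 _ _ a b) (isHomogeneous_X _ _) rfl)) rfl)

lemma hom_quart (A : Fin 5 → Fin 4 → R) (b : Fin 5) :
    (quart (fun i j => C (A i j)) X b : MvPolynomial (Fin 4) R).IsHomogeneous 4 :=
  hmul (n := 2) (m := 2) ((hmul (hom_w0 _) (hom_w1 _) rfl).sub (hmul (hom_w1 _) (hom_w0 _) rfl))
    (hom_qq _ _ _) rfl

lemma hom_mat (A : Fin 5 → Fin 4 → R) (c : Fin 3 → Fin 5 × Fin 3 → R) (k a : Fin 3) :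
    (mat (fun i j => C (A i j)) X (fun k i => C (c k i)) k a :
      MvPolynomial (Fin 4) R).IsHomogeneous 4 :=
  IsHomogeneous.sum _ _ _ fun _ _ => hmul (isHomogeneous_C _ _) (hom_quart _ _) rfl

lemma hom_det (M : Matrix (Fin 3) (Fin 3) (MvPolynomial (Fin 4) R))
    (h : ∀ k a, (M k a).IsHomogeneous 4) : M.det.IsHomogeneous 12 := by
  have h3 : ∀ a b c d e f, (M a b * M c d * M e f).IsHomogeneous 12 := fun a b c d e f =>
    hmul (hmul (h _ _) (h _ _) rfl) (h _ _) rfl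
  rw [Matrix.det_fin_three]
  exact (((((h3 _ _ _ _ _ _).sub (h3 _ _ _ _ _ _)).sub (h3 _ _ _ _ _ _)).add
    (h3 _ _ _ _ _ _)).add (h3 _ _ _ _ _ _)).sub (h3 _ _ _ _ _ _)

end Saturation

/-- the surface of degree 12 in adapted coordinates -/
lemma exists_G (A : Fin 5 → Fin 4 → ℂ) : ∃ G : R3, G ≠ 0 ∧ G.IsHomogeneous 12 ∧
    G ∈ zid (X : Fin 4 → R3) ^ 4 ∧ ∀ i, G ∈ lid (fun j => C (A i j)) (X : Fin 4 → R3) ^ 3 := by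
  obtain ⟨c, hc, hc1⟩ := exists_c A
  have hne := GR_ne_zero A c hc1
  have hhom : (GR A c).IsHomogeneous 12 := hom_det _ (hom_mat _ _)
  have hl : ∀ i, GR A c ∈ lid (fun j => C (Afam A i j)) X ^ 3 := fun i =>
    G_mem_lid (fun i j => C (Afam A i j)) X _ i
  have hz : GR A c ∈ zid (X : Fin 4 → MvPolynomial (Fin 4) (Polynomial ℂ)) ^ 4 := by
    refine sat_zid (X 2 ^ 2) _ 4 (pow_ne_zero _ (X_ne_zero _)) (by simp [th]) ?_
    refine G_mem_zid _ X _ ?_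
    intro k
    ext p : 1
    have := congrArg (C : Polynomial ℂ →+* MvPolynomial (Fin 4) (Polynomial ℂ)) (congrFun (hc k) p)
    rw [RingHom.map_mulVec] at this
    have h2 : (cm (Afam A)).map (C : Polynomial ℂ →+* MvPolynomial (Fin 4) (Polynomial ℂ)) =
        cm (fun i j => C (Afam A i j)) := by
      ext p q : 2
      rw [Matrix.map_apply, map_cm]
    rw [h2] at this
    simpa [Function.comp_def] using this
  have hirr : Irreducible (C (Polynomial.X : Polynomial ℂ) : MvPolynomial (Fin 4) (Polynomial ℂ)) :=
    (MvPolynomial.prime_C_iff _ |>.2 Polynomial.prime_X).irreducible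
  obtain ⟨n, G', hG', hGG⟩ := WfDvdMonoid.max_power_factor hne hirr
  rw [← C_pow] at hGG
  have hXn : (Polynomial.X ^ n : Polynomial ℂ) ≠ 0 := pow_ne_zero _ Polynomial.X_ne_zero
  have hl' : ∀ i, G' ∈ lid (fun j => C (Afam A i j)) X ^ 3 := fun i =>
    sat_lid _ hXn _ _ _ (hGG ▸ hl i)
  have hz' : G' ∈ zid (X : Fin 4 → MvPolynomial (Fin 4) (Polynomial ℂ)) ^ 4 :=
    sat_zid (C (Polynomial.X ^ n)) _ 4 (by simp) (by simp [th, algHom_C]) (hGG ▸ hz)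
  have hh' : G'.IsHomogeneous 12 := by
    intro d hd
    apply hhom
    rw [hGG, coeff_C_mul]
    exact mul_ne_zero hXn hd
  refine ⟨MvPolynomial.map (Polynomial.evalRingHom 0) G', ?_, hh'.map _, ?_, fun i => ?_⟩
  · intro h0
    apply hG'
    rw [C_dvd_iff_dvd_coeff]
    intro d
    have := congrArg (coeff d) h0
    rw [coeff_map] at this
    rw [Polynomial.X_dvd_iff, Polynomial.coeff_zero_eq_eval_zero]
    simpa using this
  · have h1 := Ideal.mem_map_of_mem (MvPolynomial.map (Polynomial.evalRingHom (0 : ℂ))) hz'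
    rw [Ideal.map_pow] at h1
    refine Ideal.pow_right_mono ?_ 4 h1
    rw [zid, Ideal.map_span, Ideal.span_le]
    rintro _ ⟨y, hy, rfl⟩
    rcases hy with rfl | rfl
    · simpa using x0_mem _
    · simpa using x1_mem _
  · have h1 := Ideal.mem_map_of_mem (MvPolynomial.map (Polynomial.evalRingHom (0 : ℂ))) (hl' i)
    rw [Ideal.map_pow] at h1
    refine Ideal.pow_right_mono ?_ 3 h1
    rw [lid, Ideal.map_span, Ideal.span_le]
    rintro _ ⟨y, hy, rfl⟩
    rcases hy with rfl | rfl
    · have : MvPolynomial.map (Polynomial.evalRingHom (0 : ℂ)) (w0 (fun j => C (Afam A i j)) X)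
        = w0 (fun j => C (A i j)) X := by
        simp [w0, Afam]
      rw [this]; exact w0_mem _ _
    · have : MvPolynomial.map (Polynomial.evalRingHom (0 : ℂ)) (w1 (fun j => C (Afam A i j)) X)
        = w1 (fun j => C (A i j)) X := by
        simp [w1, Afam]
      rw [this]; exact w1_mem _ _

/-! ### Coordinates -/

/-- linear form as a polynomial -/
def lin (f : C4 →ₗ[ℂ] ℂ) : R3 := ∑ j, C (f (Pi.single j 1)) * X j

lemma eval_lin (f : C4 →ₗ[ℂ] ℂ) (v : C4) : eval v (lin f) = f v := by
  rw [LinearMap.pi_apply_eq_sum_univ f v]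
  simp only [lin, map_sum, map_mul, eval_C, eval_X, smul_eq_mul]
  refine Finset.sum_congr rfl fun j _ => ?_
  rw [mul_comm]
  congr 2
  ext i
  simp [Pi.single_apply, eq_comm]

lemma hom_lin (f : C4 →ₗ[ℂ] ℂ) : (lin f).IsHomogeneous 1 :=
  IsHomogeneous.sum _ _ _ fun _ _ => hmul (isHomogeneous_C _ _) (isHomogeneous_X _ _) rfl

lemma exists_surface (L0 : Submodule ℂ C4) (L : Fin 5 → Submodule ℂ C4)
    (h0 : Module.finrank ℂ L0 = 2) (hL : ∀ i, Module.finrank ℂ (L i) = 2)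
    (hd : ∀ i, L i ⊓ L0 = ⊥) :
    ∃ G : R3, G ≠ 0 ∧ G.IsHomogeneous 12 ∧ G ∈ lineIdeal L0 ^ 4 ∧ ∀ i, G ∈ lineIdeal (L i) ^ 3 := by
  have hq : Module.finrank ℂ (C4 ⧸ L0) = Module.finrank ℂ (Fin 2 → ℂ) := by
    have := Submodule.finrank_quotient_add_finrank L0
    simp at this ⊢
    omega
  let e := LinearEquiv.ofFinrankEq (C4 ⧸ L0) (Fin 2 → ℂ) hq
  let p : C4 →ₗ[ℂ] (Fin 2 → ℂ) := e.toLinearMap.comp L0.mkQ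
  have hp0 : ∀ v, p v = 0 ↔ v ∈ L0 := by
    intro v
    simp [p]
  have hps : Function.Surjective p := e.surjective.comp L0.mkQ_surjective
  let e2 := LinearEquiv.ofFinrankEq L0 (Fin 2 → ℂ) (by rw [h0]; simp)
  obtain ⟨q, hqe⟩ := LinearMap.exists_extend e2.toLinearMap
  have hsurj : ∀ z1 z2 : Fin 2 → ℂ, ∃ v, p v = z1 ∧ q v = z2 := by
    intro z1 z2
    obtain ⟨v1, hv1⟩ := hps z1
    obtain ⟨l, hl⟩ := e2.surjective (z2 - q v1)
    refine ⟨v1 + l, ?_, ?_⟩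
    · rw [map_add, (hp0 l).2 l.2, hv1, add_zero]
    · have : q l = e2 l := DFunLike.congr_fun hqe l
      rw [map_add, this, hl]; abel
  have hA : ∀ i, ∃ a : Fin 4 → ℂ, ∀ v ∈ L i, q v 0 = a 0 * p v 0 + a 1 * p v 1 ∧
      q v 1 = a 2 * p v 0 + a 3 * p v 1 := by
    intro i
    have hinj : Function.Injective (p.comp (L i).subtype) := by
      rw [← LinearMap.ker_eq_bot, LinearMap.ker_eq_bot']
      intro v hv
      have h1 : (v : C4) ∈ L i ⊓ L0 := ⟨v.2, (hp0 _).1 hv⟩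
      rw [hd i] at h1
      exact Subtype.ext ((Submodule.mem_bot ℂ).1 h1)
    let E := LinearMap.linearEquivOfInjective (p.comp (L i).subtype) hinj (by rw [hL i]; simp)
    let T : (Fin 2 → ℂ) →ₗ[ℂ] (Fin 2 → ℂ) := q.comp ((L i).subtype.comp E.symm.toLinearMap)
    let M := LinearMap.toMatrix' T
    refine ⟨![M 0 0, M 0 1, M 1 0, M 1 1], fun v hv => ?_⟩
    have h1 : E ⟨v, hv⟩ = p v := rfl
    have h2 : T (p v) = q v := by
      rw [← h1]; simp [T]
    have h3 : M.mulVec (p v) = q v := by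
      rw [← h2]; exact LinearMap.toMatrix'_mulVec T (p v)
    constructor
    · rw [← h3]; simp [Matrix.mulVec, dotProduct, Fin.sum_univ_two]
    · rw [← h3]; simp [Matrix.mulVec, dotProduct, Fin.sum_univ_two]
  choose A hA using hA
  obtain ⟨G, hG0, hGh, hGz, hGl⟩ := exists_G A
  let y : Fin 4 → R3 := ![lin ((LinearMap.proj 0).comp p), lin ((LinearMap.proj 1).comp p),
    lin ((LinearMap.proj 0).comp q), lin ((LinearMap.proj 1).comp q)]
  have hyh : ∀ i, (y i).IsHomogeneous 1 := by
    intro i; fin_cases i <;> exact hom_lin _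
  have hy : ∀ v, (fun i => eval v (y i)) = ![p v 0, p v 1, q v 0, q v 1] := by
    intro v; ext i; fin_cases i <;> simp [y, eval_lin]
  have hev : ∀ v F, eval v (aeval y F) = eval ![p v 0, p v 1, q v 0, q v 1] F := by
    intro v F
    rw [← hy v]
    have : (eval v).comp (aeval y : R3 →ₐ[ℂ] R3).toRingHom = eval (fun i => eval v (y i)) := by
      apply MvPolynomial.ringHom_ext
      · intro r; simp [algHom_C]
      · intro i; simp
    exact DFunLike.congr_fun this F
  refine ⟨aeval y G, ?_, ?_, ?_, fun i => ?_⟩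
  · intro hz
    apply hG0
    apply MvPolynomial.funext
    intro z
    obtain ⟨v, hv1, hv2⟩ := hsurj ![z 0, z 1] ![z 2, z 3]
    have h1 := hev v G
    rw [hz, hv1, hv2] at h1
    have h2 : ![(![z 0, z 1] : Fin 2 → ℂ) 0, (![z 0, z 1] : Fin 2 → ℂ) 1,
      (![z 2, z 3] : Fin 2 → ℂ) 0, (![z 2, z 3] : Fin 2 → ℂ) 1] = z := by
      ext i; fin_cases i <;> rfl
    rw [h2] at h1
    rw [← h1]; simp
  · simpa using hGh.aeval y hyh
  · have h1 := Ideal.mem_map_of_mem (aeval y : R3 →ₐ[ℂ] R3).toRingHom hGz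
    rw [Ideal.map_pow] at h1
    refine Ideal.pow_right_mono ?_ 4 h1
    rw [zid, Ideal.map_span, Ideal.span_le]
    rintro _ ⟨F, hF, rfl⟩
    intro v hv
    have hpv := (hp0 v).2 hv
    refine (hev v F).trans ?_
    rcases hF with rfl | rfl <;> simp [hpv]
  · have h1 := Ideal.mem_map_of_mem (aeval y : R3 →ₐ[ℂ] R3).toRingHom (hGl i)
    rw [Ideal.map_pow] at h1
    refine Ideal.pow_right_mono ?_ 3 h1
    rw [lid, Ideal.map_span, Ideal.span_le]
    rintro _ ⟨F, hF, rfl⟩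
    intro v hv
    obtain ⟨ha, hb⟩ := hA i v hv
    refine (hev v F).trans ?_
    rcases hF with rfl | rfl
    · simp [w0, ha]
    · simp [w1, hb]

/-- For six pairwise skew lines in `P^3` there is a nonzero form of degree `72`
with multiplicity `19` along each line; consequently `α(I^{(19)}) ≤ 72`, where
`I^{(m)} = ⋂ᵢ I(Lᵢ)^m`, giving the bound `72/19` for the Waldschmidt constant. -/
theorem stmt_16 (L : Fin 6 → Submodule ℂ C4)
    (hdim : ∀ i, Module.finrank ℂ ↥(L i) = 2)
    (hskew : ∀ i j, i ≠ j → L i ⊓ L j = ⊥) :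
    (∃ F : R3, F ≠ 0 ∧ F.IsHomogeneous 72 ∧ ∀ i, F ∈ (lineIdeal (L i)) ^ 19) ∧
    alphaDeg (⨅ i, (lineIdeal (L i)) ^ 19) ≤ 72 := by
  have hS : ∀ j : Fin 6, ∃ G : R3, G ≠ 0 ∧ G.IsHomogeneous 12 ∧ G ∈ lineIdeal (L j) ^ 4 ∧
      ∀ i : Fin 5, G ∈ lineIdeal (L (j.succAbove i)) ^ 3 := fun j =>
    exists_surface (L j) (fun i => L (j.succAbove i)) (hdim j) (fun i => hdim _)
      (fun i => hskew _ _ (Fin.succAbove_ne j i))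
  choose G hG0 hGh hG4 hG3 using hS
  have hmem : ∀ i j, G j ∈ lineIdeal (L i) ^ (if j = i then 4 else 3) := by
    intro i j
    by_cases h : j = i
    · subst h; simpa using hG4 j
    · obtain ⟨k, hk⟩ := Fin.exists_succAbove_eq (Ne.symm h)
      rw [if_neg h, ← hk]
      exact hG3 j k
  have main : (∏ j, G j) ≠ 0 ∧ (∏ j, G j).IsHomogeneous 72 ∧
      ∀ i, (∏ j, G j) ∈ (lineIdeal (L i)) ^ 19 := by
    refine ⟨Finset.prod_ne_zero_iff.2 fun j _ => hG0 j, ?_, fun i => ?_⟩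
    · have := IsHomogeneous.prod Finset.univ G (fun _ => 12) (fun j _ => hGh j)
      simpa using this
    · have h1 := Ideal.prod_mem_prod (s := Finset.univ) (fun j _ => hmem i j)
      rw [Finset.prod_pow_eq_pow_sum] at h1
      have h2 : ∀ i : Fin 6, ∑ j : Fin 6, (if j = i then 4 else 3) = 19 := by
        decide
      rwa [h2 i] at h1
  refine ⟨⟨_, main⟩, Nat.sInf_le ⟨∏ j, G j, ?_, main.1, main.2.1⟩⟩
  exact (Submodule.mem_iInf _).2 main.2.2
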